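/- arXiv:2001.06866 — 11 statements merged into one kernel-verified Lean document; each statement's English description precedes it below -/
import Mathlib

section
/- For all points P and Q in the plane, dist(A₁',F₁₂) + dist(A₂',F₁₂) + dist(A₃,F₃₄) + dist(A₄,F₃₄) + 2·sin(θ/2)·dist(F₁₂,F₃₄) ≤ dist(A₁',P) + dist(A₂',P) + dist(A₃,Q) + dist(A₄,Q) + 2·sin(θ/2)·dist(P,Q); that is, the pair (F₁₂,F₃₄) with equal weights w(θ) = 2·sin(θ/2) solves the weighted two-node minimum network problem for the isosceles trapezium. -/
open Real EuclideanGeometry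

noncomputable def pt (x y : ℝ) : EuclideanSpace ℝ (Fin 2) :=
  (WithLp.equiv 2 (Fin 2 → ℝ)).symm ![x, y]

lemma low (A P : EuclideanSpace ℝ (Fin 2)) (u v : ℝ) (h : u ^ 2 + v ^ 2 = 1) :
    u * (A 0 - P 0) + v * (A 1 - P 1) ≤ dist A P := by
  rw [EuclideanSpace.dist_eq, Fin.sum_univ_two, Real.dist_eq, Real.dist_eq, sq_abs, sq_abs]
  apply Real.le_sqrt_of_sq_le
  generalize A 0 - P 0 = x
  generalize A 1 - P 1 = y
  have : (u * x + v * y) ^ 2 + (u * y - v * x) ^ 2 = (u ^ 2 + v ^ 2) * (x ^ 2 + y ^ 2) := by ring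
  rw [h] at this
  nlinarith [sq_nonneg (u * y - v * x)]

lemma dist_of (A P : EuclideanSpace ℝ (Fin 2)) (r : ℝ) (hr : 0 ≤ r)
    (h : (A 0 - P 0) ^ 2 + (A 1 - P 1) ^ 2 = r ^ 2) : dist A P = r := by
  rw [EuclideanSpace.dist_eq, Fin.sum_univ_two, Real.dist_eq, Real.dist_eq, sq_abs, sq_abs, h,
    Real.sqrt_sq hr]

lemma pt0 (x y : ℝ) : pt x y 0 = x := by simp [pt]
lemma pt1 (x y : ℝ) : pt x y 1 = y := by simp [pt]

theorem stmt_0 (a12 a34 d θ : ℝ) (ha12 : 0 < a12) (ha34 : 0 < a34)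
    (hd : max a12 a34 < d)
    (hθ : θ = 2 * Real.arctan ((a12 + a34) / (2 * d)))
    (A₁' A₂' A₃ A₄ F₁₂ F₃₄ : EuclideanSpace ℝ (Fin 2))
    (hA₁ : A₁' = pt (-(a12 / 2)) d) (hA₂ : A₂' = pt (a12 / 2) d)
    (hA₃ : A₃ = pt (a34 / 2) 0) (hA₄ : A₄ = pt (-(a34 / 2)) 0)
    (hF₁₂ : F₁₂ = pt 0 (d - a12 / 2 * Real.tan (θ / 2)))
    (hF₃₄ : F₃₄ = pt 0 (a34 / 2 * Real.tan (θ / 2))) :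
    ∀ P Q : EuclideanSpace ℝ (Fin 2),
      dist A₁' F₁₂ + dist A₂' F₁₂ + dist A₃ F₃₄ + dist A₄ F₃₄ +
        2 * Real.sin (θ / 2) * dist F₁₂ F₃₄ ≤
      dist A₁' P + dist A₂' P + dist A₃ Q + dist A₄ Q +
        2 * Real.sin (θ / 2) * dist P Q := by
  intro P Q
  have h1 : a12 < d := lt_of_le_of_lt (le_max_left _ _) hd
  have h2 : a34 < d := lt_of_le_of_lt (le_max_right _ _) hd
  have hd0 : 0 < d := ha12.trans h1
  have hφ : θ / 2 = Real.arctan ((a12 + a34) / (2 * d)) := by rw [hθ]; ring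
  have ht : Real.tan (θ / 2) = (a12 + a34) / (2 * d) := by rw [hφ, Real.tan_arctan]
  have hc : 0 < Real.cos (θ / 2) := by rw [hφ]; exact Real.cos_arctan_pos _
  have ht0 : 0 < Real.tan (θ / 2) := by rw [ht]; positivity
  have ht1 : Real.tan (θ / 2) < 1 := by
    rw [ht, div_lt_one (by positivity)]; linarith
  have hs : Real.sin (θ / 2) = Real.tan (θ / 2) * Real.cos (θ / 2) :=
    (Real.tan_mul_cos hc.ne').symm
  have hsc := Real.sin_sq_add_cos_sq (θ / 2)
  generalize Real.tan (θ / 2) = t at *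
  generalize Real.cos (θ / 2) = c at *
  generalize Real.sin (θ / 2) = s at *
  have hs0 : 0 < s := by rw [hs]; positivity
  have hk : (1 + t ^ 2) * c ^ 2 = 1 := by rw [hs] at hsc; linarith
  have hk' : (1 + t ^ 2) * c = 1 / c := by field_simp; linarith
  have hr : ∀ a : ℝ, (a / 2) ^ 2 + (a / 2 * t) ^ 2 = (a / 2 * ((1 + t ^ 2) * c)) ^ 2 := by
    intro a
    linear_combination (-(a / 2) ^ 2 * (1 + t ^ 2)) * hk
  have e1 : dist A₁' F₁₂ = a12 / 2 * ((1 + t ^ 2) * c) := by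
    apply dist_of _ _ _ (by positivity)
    rw [hA₁, hF₁₂, pt0, pt1, pt0, pt1, ← hr]; ring
  have e2 : dist A₂' F₁₂ = a12 / 2 * ((1 + t ^ 2) * c) := by
    apply dist_of _ _ _ (by positivity)
    rw [hA₂, hF₁₂, pt0, pt1, pt0, pt1, ← hr]; ring
  have e3 : dist A₃ F₃₄ = a34 / 2 * ((1 + t ^ 2) * c) := by
    apply dist_of _ _ _ (by positivity)
    rw [hA₃, hF₃₄, pt0, pt1, pt0, pt1, ← hr]; ring
  have e4 : dist A₄ F₃₄ = a34 / 2 * ((1 + t ^ 2) * c) := by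
    apply dist_of _ _ _ (by positivity)
    rw [hA₄, hF₃₄, pt0, pt1, pt0, pt1, ← hr]; ring
  have e5 : dist F₁₂ F₃₄ = d - (a12 + a34) / 2 * t := by
    apply dist_of
    · nlinarith
    · rw [hF₁₂, hF₃₄, pt0, pt1, pt0, pt1]; ring
  have l1 := low A₁' P (-c) s (by linarith [neg_sq c])
  have l2 := low A₂' P c s (by linarith)
  have l3 := low A₃ Q c (-s) (by linarith [neg_sq s])
  have l4 := low A₄ Q (-c) (-s) (by linarith [neg_sq s, neg_sq c])
  have l5 := mul_le_mul_of_nonneg_left (low P Q 0 1 (by norm_num)) (by positivity : 0 ≤ 2 * s)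
  rw [hA₁, pt0, pt1, ← hA₁] at l1
  rw [hA₂, pt0, pt1, ← hA₂] at l2
  rw [hA₃, pt0, pt1, ← hA₃] at l3
  rw [hA₄, pt0, pt1, ← hA₄] at l4
  rw [e1, e2, e3, e4, e5]
  have key : a12 / 2 * ((1 + t ^ 2) * c) + a12 / 2 * ((1 + t ^ 2) * c) + a34 / 2 * ((1 + t ^ 2) * c)
      + a34 / 2 * ((1 + t ^ 2) * c) + 2 * s * (d - (a12 + a34) / 2 * t)
      = c * (a12 + a34) + 2 * s * d := by
    rw [hs]; ring
  rw [key]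
  linarith
end

section
/- Proposition 1: The length of the minimum construction tree of the isosceles trapezium, namely 2·dist(A₁',F₁₂) + 2·dist(A₃,F₃₄) + 2·sin(θ/2)·dist(F₁₂,F₃₄), equals 2·(a12 + a34)·cos(θ/2). -/
open Real EuclideanGeometry

theorem stmt_1 (a12 a34 d θ : ℝ) (ha12 : 0 < a12) (ha34 : 0 < a34)
    (hd : max a12 a34 < d)
    (hθ : θ = 2 * Real.arctan ((a12 + a34) / (2 * d)))
    (A₁' A₂' A₃ A₄ F₁₂ F₃₄ : EuclideanSpace ℝ (Fin 2))
    (hA₁ : A₁' = pt (-(a12 / 2)) d) (hA₂ : A₂' = pt (a12 / 2) d)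
    (hA₃ : A₃ = pt (a34 / 2) 0) (hA₄ : A₄ = pt (-(a34 / 2)) 0)
    (hF₁₂ : F₁₂ = pt 0 (d - a12 / 2 * Real.tan (θ / 2)))
    (hF₃₄ : F₃₄ = pt 0 (a34 / 2 * Real.tan (θ / 2))) :
    2 * dist A₁' F₁₂ + 2 * dist A₃ F₃₄ +
      2 * Real.sin (θ / 2) * dist F₁₂ F₃₄ =
    2 * (a12 + a34) * Real.cos (θ / 2) := by
  have h1 := (max_lt_iff.mp hd).1
  have h2 := (max_lt_iff.mp hd).2
  have hd0 : 0 < d := ha12.trans h1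
  have hx : θ / 2 = Real.arctan ((a12 + a34) / (2 * d)) := by rw [hθ]; ring
  have hc : 0 < Real.cos (θ / 2) := by rw [hx]; exact Real.cos_arctan_pos _
  have ht : Real.tan (θ / 2) = (a12 + a34) / (2 * d) := by rw [hx, Real.tan_arctan]
  have htc : Real.tan (θ / 2) * Real.cos (θ / 2) = Real.sin (θ / 2) :=
    Real.tan_mul_cos hc.ne'
  have htd : Real.tan (θ / 2) * (2 * d) = a12 + a34 := by
    rw [ht]; field_simp
  have hsc := Real.sin_sq_add_cos_sq (θ / 2)
  have ht0 : 0 < Real.tan (θ / 2) := by rw [ht]; positivity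
  have ht1 : Real.tan (θ / 2) < 1 := by
    rw [ht, div_lt_one (by positivity)]; linarith
  generalize Real.tan (θ / 2) = t at *
  generalize Real.sin (θ / 2) = s at *
  generalize Real.cos (θ / 2) = c at *
  have hdist : ∀ x y u v : ℝ, dist (pt x y) (pt u v) = Real.sqrt ((x - u) ^ 2 + (y - v) ^ 2) := by
    intro x y u v
    simp [pt, EuclideanSpace.dist_eq, Fin.sum_univ_two, Real.dist_eq, sq_abs]
  subst htc
  have hs : (1 + t ^ 2) * c ^ 2 = 1 := by linarith
  have e1 : dist A₁' F₁₂ = a12 / 2 / c := by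
    rw [hA₁, hF₁₂, hdist, Real.sqrt_eq_iff_mul_self_eq (by positivity) (by positivity)]
    field_simp
    linear_combination a12 ^ 2 * hs
  have e2 : dist A₃ F₃₄ = a34 / 2 / c := by
    rw [hA₃, hF₃₄, hdist, Real.sqrt_eq_iff_mul_self_eq (by positivity) (by positivity)]
    field_simp
    linear_combination a34 ^ 2 * hs
  have e3 : dist F₁₂ F₃₄ = d - (a12 + a34) / 2 * t := by
    have : 0 ≤ d - (a12 + a34) / 2 * t := by nlinarith
    rw [hF₁₂, hF₃₄, hdist, Real.sqrt_eq_iff_mul_self_eq (by positivity) this]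
    ring
  rw [e1, e2, e3]
  field_simp
  linear_combination c ^ 2 * htd - (a12 + a34) * hs
end

section
/- The edge lengths of the construction tree are: dist(A₁',F₁₂) = dist(A₂',F₁₂) = a12/(2·cos(θ/2)), dist(A₃,F₃₄) = dist(A₄,F₃₄) = a34/(2·cos(θ/2)), and dist(F₁₂,F₃₄) = d − ((a12 + a34)/2)·tan(θ/2). -/
open Real EuclideanGeometry

theorem dist_pt_aux (x y u v r : ℝ) (hr : 0 ≤ r) (h : (x - u) ^ 2 + (y - v) ^ 2 = r ^ 2) :
    dist (pt x y) (pt u v) = r := by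
  rw [EuclideanSpace.dist_eq]
  simp only [pt, Fin.sum_univ_two, Real.dist_eq, sq_abs]
  simp only [WithLp.equiv_symm_apply, Matrix.cons_val_zero, Matrix.cons_val_one]
  rw [h, Real.sqrt_sq hr]

theorem stmt_2 (a12 a34 d θ : ℝ) (ha12 : 0 < a12) (ha34 : 0 < a34)
    (hd : max a12 a34 < d)
    (hθ : θ = 2 * Real.arctan ((a12 + a34) / (2 * d)))
    (A₁' A₂' A₃ A₄ F₁₂ F₃₄ : EuclideanSpace ℝ (Fin 2))
    (hA₁ : A₁' = pt (-(a12 / 2)) d) (hA₂ : A₂' = pt (a12 / 2) d)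
    (hA₃ : A₃ = pt (a34 / 2) 0) (hA₄ : A₄ = pt (-(a34 / 2)) 0)
    (hF₁₂ : F₁₂ = pt 0 (d - a12 / 2 * Real.tan (θ / 2)))
    (hF₃₄ : F₃₄ = pt 0 (a34 / 2 * Real.tan (θ / 2))) :
    dist A₁' F₁₂ = a12 / (2 * Real.cos (θ / 2)) ∧
    dist A₂' F₁₂ = a12 / (2 * Real.cos (θ / 2)) ∧
    dist A₃ F₃₄ = a34 / (2 * Real.cos (θ / 2)) ∧
    dist A₄ F₃₄ = a34 / (2 * Real.cos (θ / 2)) ∧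
    dist F₁₂ F₃₄ = d - (a12 + a34) / 2 * Real.tan (θ / 2) := by
  have h1 : a12 < d := lt_of_le_of_lt (le_max_left _ _) hd
  have h2 : a34 < d := lt_of_le_of_lt (le_max_right _ _) hd
  have hd0 : 0 < d := ha12.trans h1
  have ht2 : θ / 2 = Real.arctan ((a12 + a34) / (2 * d)) := by rw [hθ]; ring
  have hc : 0 < Real.cos (θ / 2) := by rw [ht2]; exact Real.cos_arctan_pos _
  have htan : Real.tan (θ / 2) = (a12 + a34) / (2 * d) := by rw [ht2, Real.tan_arctan]
  have ht1 : Real.tan (θ / 2) < 1 := by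
    rw [htan, div_lt_one (by positivity)]; linarith
  have hsec : 1 + Real.tan (θ / 2) ^ 2 = (1 / Real.cos (θ / 2)) ^ 2 := by
    rw [Real.tan_eq_sin_div_cos]
    field_simp
    linarith [Real.sin_sq_add_cos_sq (θ / 2)]
  have hr : ∀ a : ℝ, a / (2 * Real.cos (θ / 2)) = a / 2 * (1 / Real.cos (θ / 2)) := by
    intro a; field_simp
  have hi : 0 < 1 / Real.cos (θ / 2) := by positivity
  subst hA₁ hA₂ hA₃ hA₄ hF₁₂ hF₃₄
  rw [hr, hr]
  refine ⟨?_, ?_, ?_, ?_, ?_⟩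
  · apply dist_pt_aux _ _ _ _ _ (by positivity)
    rw [mul_pow, ← hsec]; ring
  · apply dist_pt_aux _ _ _ _ _ (by positivity)
    rw [mul_pow, ← hsec]; ring
  · apply dist_pt_aux _ _ _ _ _ (by positivity)
    rw [mul_pow, ← hsec]; ring
  · apply dist_pt_aux _ _ _ _ _ (by positivity)
    rw [mul_pow, ← hsec]; ring
  · apply dist_pt_aux
    · nlinarith
    · ring
end

section
/- The undirected angles at the two nodes of the construction tree satisfy ∠ A₁' F₁₂ A₂' = π − θ and ∠ A₄ F₃₄ A₃ = π − θ. -/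
open Real EuclideanGeometry

theorem aux (h y z t : ℝ) (hh : 0 < h) (ht : 0 < t) (hyz : (y - z) ^ 2 = (h * t) ^ 2) :
    ∠ (pt (-h) y) (pt 0 z) (pt h y) = π - 2 * Real.arctan t := by
  have h1 : 0 < Real.arctan t := Real.arctan_pos.2 ht
  have h2 : Real.arctan t < π / 2 := Real.arctan_lt_pi_div_two t
  have hc : Real.cos (π - 2 * Real.arctan t) = (t ^ 2 - 1) / (1 + t ^ 2) := by
    rw [Real.cos_pi_sub, Real.cos_two_mul, Real.cos_sq_arctan]
    have : (1 + t ^ 2) ≠ 0 := by positivity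
    field_simp
    ring
  have hn : ‖pt (-h) y - pt 0 z‖ = √(h ^ 2 * (1 + t ^ 2)) := by
    rw [EuclideanSpace.norm_eq]
    congr 1
    simp [pt, Fin.sum_univ_two]
    rw [hyz]; ring
  have hn' : ‖pt h y - pt 0 z‖ = √(h ^ 2 * (1 + t ^ 2)) := by
    rw [EuclideanSpace.norm_eq]
    congr 1
    simp [pt, Fin.sum_univ_two]
    rw [hyz]; ring
  have hi : inner ℝ (pt (-h) y - pt 0 z) (pt h y - pt 0 z) = h ^ 2 * (t ^ 2 - 1) := by
    simp [pt, PiLp.inner_apply, Fin.sum_univ_two]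
    nlinarith [hyz]
  rw [← Real.arccos_cos (x := π - 2 * Real.arctan t) (by linarith) (by linarith), hc]
  unfold EuclideanGeometry.angle InnerProductGeometry.angle
  rw [vsub_eq_sub, vsub_eq_sub, hn, hn', hi, Real.mul_self_sqrt (by positivity)]
  congr 1
  have : (1 + t ^ 2) ≠ 0 := by positivity
  field_simp

theorem stmt_3 (a12 a34 d θ : ℝ) (ha12 : 0 < a12) (ha34 : 0 < a34)
    (hd : max a12 a34 < d)
    (hθ : θ = 2 * Real.arctan ((a12 + a34) / (2 * d)))
    (A₁' A₂' A₃ A₄ F₁₂ F₃₄ : EuclideanSpace ℝ (Fin 2))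
    (hA₁ : A₁' = pt (-(a12 / 2)) d) (hA₂ : A₂' = pt (a12 / 2) d)
    (hA₃ : A₃ = pt (a34 / 2) 0) (hA₄ : A₄ = pt (-(a34 / 2)) 0)
    (hF₁₂ : F₁₂ = pt 0 (d - a12 / 2 * Real.tan (θ / 2)))
    (hF₃₄ : F₃₄ = pt 0 (a34 / 2 * Real.tan (θ / 2))) :
    ∠ A₁' F₁₂ A₂' = π - θ ∧ ∠ A₄ F₃₄ A₃ = π - θ := by
  have hd0 : 0 < d := lt_trans (lt_of_lt_of_le ha12 (le_max_left _ _)) hd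
  have ht : 0 < (a12 + a34) / (2 * d) := by positivity
  have htan : Real.tan (θ / 2) = (a12 + a34) / (2 * d) := by
    rw [hθ, mul_div_cancel_left₀ _ (two_ne_zero), Real.tan_arctan]
  rw [htan] at hF₁₂ hF₃₄
  subst hA₁ hA₂ hA₃ hA₄ hF₁₂ hF₃₄
  rw [hθ]
  exact ⟨aux _ _ _ _ (by positivity) ht (by ring), aux _ _ _ _ (by positivity) ht (by ring)⟩
end

section
/- F₁₂ is the weighted Fermat–Torricelli point of the triangle A₁', A₂', F₃₄ with weights 1, 1, 2·sin(θ/2): for every point P in the plane, dist(A₁',F₁₂) + dist(A₂',F₁₂) + 2·sin(θ/2)·dist(F₃₄,F₁₂) ≤ dist(A₁',P) + dist(A₂',P) + 2·sin(θ/2)·dist(F₃₄,P). Symmetrically, F₃₄ is the weighted Fermat–Torricelli point of the triangle A₄, A₃, F₁₂ with weights 1, 1, 2·sin(θ/2): for every point Q, dist(A₃,F₃₄) + dist(A₄,F₃₄) + 2·sin(θ/2)·dist(F₁₂,F₃₄) ≤ dist(A₃,Q) + dist(A₄,Q) + 2·sin(θ/2)·dist(F₁₂,Q). -/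
open Real EuclideanGeometry

lemma dist_pt (a b x y : ℝ) : dist (pt a b) (pt x y) = Real.sqrt ((a - x)^2 + (b - y)^2) := by
  simp [pt, EuclideanSpace.dist_eq, Fin.sum_univ_two, Real.dist_eq, sq_abs]

lemma exists_pt (P : EuclideanSpace ℝ (Fin 2)) : ∃ x y, P = pt x y := by
  refine ⟨P 0, P 1, ?_⟩
  ext i
  fin_cases i <;> simp [pt]

lemma lin_le_dist (u v a b x y : ℝ) (h : u^2 + v^2 = 1) :
    u * (a - x) + v * (b - y) ≤ dist (pt a b) (pt x y) := by
  rw [dist_pt]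
  apply Real.le_sqrt_of_sq_le
  have : (u^2+v^2) * ((a - x)^2 + (b - y)^2) = (a - x)^2 + (b - y)^2 := by rw [h, one_mul]
  nlinarith [sq_nonneg (u * (b - y) - v * (a - x))]

lemma dist_eq_lin (u v a b x y r : ℝ) (h : u^2 + v^2 = 1) (hr : 0 ≤ r)
    (h1 : a - x = r * u) (h2 : b - y = r * v) :
    dist (pt a b) (pt x y) = r := by
  rw [dist_pt, h1, h2]
  have : (r * u)^2 + (r * v)^2 = r^2 := by linear_combination r^2 * h
  rw [this, Real.sqrt_sq hr]

theorem stmt_7 (a12 a34 d θ : ℝ) (ha12 : 0 < a12) (ha34 : 0 < a34)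
    (hd : max a12 a34 < d)
    (hθ : θ = 2 * Real.arctan ((a12 + a34) / (2 * d)))
    (A₁' A₂' A₃ A₄ F₁₂ F₃₄ : EuclideanSpace ℝ (Fin 2))
    (hA₁ : A₁' = pt (-(a12 / 2)) d) (hA₂ : A₂' = pt (a12 / 2) d)
    (hA₃ : A₃ = pt (a34 / 2) 0) (hA₄ : A₄ = pt (-(a34 / 2)) 0)
    (hF₁₂ : F₁₂ = pt 0 (d - a12 / 2 * Real.tan (θ / 2)))
    (hF₃₄ : F₃₄ = pt 0 (a34 / 2 * Real.tan (θ / 2))) :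
    (∀ P : EuclideanSpace ℝ (Fin 2),
      dist A₁' F₁₂ + dist A₂' F₁₂ + 2 * Real.sin (θ / 2) * dist F₃₄ F₁₂ ≤
      dist A₁' P + dist A₂' P + 2 * Real.sin (θ / 2) * dist F₃₄ P) ∧
    (∀ Q : EuclideanSpace ℝ (Fin 2),
      dist A₃ F₃₄ + dist A₄ F₃₄ + 2 * Real.sin (θ / 2) * dist F₁₂ F₃₄ ≤
      dist A₃ Q + dist A₄ Q + 2 * Real.sin (θ / 2) * dist F₁₂ Q) := by
  have ht0 : Real.tan (θ / 2) = (a12 + a34) / (2 * d) := by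
    rw [hθ, mul_div_cancel_left₀ _ (two_ne_zero), Real.tan_arctan]
  have hc : 0 < Real.cos (θ / 2) := by
    rw [hθ, mul_div_cancel_left₀ _ (two_ne_zero)]
    exact Real.cos_arctan_pos _
  have hst : Real.sin (θ / 2) = Real.tan (θ / 2) * Real.cos (θ / 2) :=
    (Real.tan_mul_cos hc.ne').symm
  have hsc := Real.sin_sq_add_cos_sq (θ / 2)
  have hd1 : a12 < d := lt_of_le_of_lt (le_max_left _ _) hd
  have hd2 : a34 < d := lt_of_le_of_lt (le_max_right _ _) hd
  have hdp : 0 < d := ha12.trans hd1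
  have htp : 0 < Real.tan (θ / 2) := by rw [ht0]; positivity
  have ht1 : Real.tan (θ / 2) < 1 := by
    rw [ht0, div_lt_one (by positivity)]; linarith
  generalize Real.tan (θ / 2) = t at *
  generalize Real.sin (θ / 2) = s at *
  generalize Real.cos (θ / 2) = c at *
  have hs : 0 < s := by rw [hst]; positivity
  have hg : 0 ≤ d - a12 / 2 * t - a34 / 2 * t := by nlinarith
  have hr (a : ℝ) : a / 2 = a / (2 * c) * c := by field_simp
  have hr2 (a : ℝ) : a / 2 * t = a / (2 * c) * s := by rw [hst]; field_simp
  have key (a : ℝ) : a / (2 * c) = c * (a / 2) + s * (a / 2 * t) := by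
    rw [hr2 a]
    have := hr a
    linear_combination c * (-this) - a / (2 * c) * hsc
  subst hA₁ hA₂ hA₃ hA₄ hF₁₂ hF₃₄
  have e1 : c^2 + s^2 = 1 := by linarith
  have e2 : (-c)^2 + s^2 = 1 := by linarith [neg_sq c]
  have e3 : (-c)^2 + (-s)^2 = 1 := by linarith [neg_sq c, neg_sq s]
  have e4 : c^2 + (-s)^2 = 1 := by linarith [neg_sq c, neg_sq s]
  constructor
  · intro P
    obtain ⟨x, y, rfl⟩ := exists_pt P
    rw [dist_eq_lin (-c) s (-(a12/2)) d 0 (d - a12 / 2 * t) (a12 / (2 * c)) e2 (by positivity)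
        (by linarith [hr a12]) (by linarith [hr2 a12]),
      dist_eq_lin c s (a12/2) d 0 (d - a12 / 2 * t) (a12 / (2 * c)) e1 (by positivity)
        (by linarith [hr a12]) (by linarith [hr2 a12]),
      dist_eq_lin 0 (-1) 0 (a34 / 2 * t) 0 (d - a12 / 2 * t) _ (by norm_num) hg
        (by ring) (by ring)]
    have l1 := lin_le_dist (-c) s (-(a12/2)) d x y e2
    have l2 := lin_le_dist c s (a12/2) d x y e1
    have l3 := mul_le_mul_of_nonneg_left
      (lin_le_dist 0 (-1) 0 (a34 / 2 * t) x y (by norm_num)) (by positivity : 0 ≤ 2 * s)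
    have k := key a12
    linarith
  · intro P
    obtain ⟨x, y, rfl⟩ := exists_pt P
    rw [dist_eq_lin c (-s) (a34/2) 0 0 (a34 / 2 * t) (a34 / (2 * c)) e4 (by positivity)
        (by linarith [hr a34]) (by linarith [hr2 a34]),
      dist_eq_lin (-c) (-s) (-(a34/2)) 0 0 (a34 / 2 * t) (a34 / (2 * c)) e3 (by positivity)
        (by linarith [hr a34]) (by linarith [hr2 a34]),
      dist_eq_lin 0 1 0 (d - a12 / 2 * t) 0 (a34 / 2 * t) _ (by norm_num) hg
        (by ring) (by ring)]
    have l1 := lin_le_dist c (-s) (a34/2) 0 x y e4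
    have l2 := lin_le_dist (-c) (-s) (-(a34/2)) 0 x y e3
    have l3 := mul_le_mul_of_nonneg_left
      (lin_le_dist 0 1 0 (d - a12 / 2 * t) x y (by norm_num)) (by positivity : 0 ≤ 2 * s)
    have k := key a34
    linarith
end

section
/- Proposition 2: The length of the full (equally weighted) Steiner tree of the isosceles trapezium, namely 2·dist(A₁',O₁₂) + 2·dist(A₃,O₃₄) + dist(O₁₂,O₃₄), equals (a12 + a34)·(√3/2 + cos(θ/2)/(2·sin(θ/2))). -/
open Real EuclideanGeometry

theorem stmt_8 (a12 a34 d θ : ℝ) (ha12 : 0 < a12) (ha34 : 0 < a34)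
    (hd : max a12 a34 < d)
    (hθ : θ = 2 * Real.arctan ((a12 + a34) / (2 * d)))
    (A₁' A₂' A₃ A₄ O₁₂ O₃₄ : EuclideanSpace ℝ (Fin 2))
    (hA₁ : A₁' = pt (-(a12 / 2)) d) (hA₂ : A₂' = pt (a12 / 2) d)
    (hA₃ : A₃ = pt (a34 / 2) 0) (hA₄ : A₄ = pt (-(a34 / 2)) 0)
    (hO₁₂ : O₁₂ = pt 0 (d - a12 / (2 * Real.sqrt 3)))
    (hO₃₄ : O₃₄ = pt 0 (a34 / (2 * Real.sqrt 3))) :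
    2 * dist A₁' O₁₂ + 2 * dist A₃ O₃₄ + dist O₁₂ O₃₄ =
    (a12 + a34) * (Real.sqrt 3 / 2 + Real.cos (θ / 2) / (2 * Real.sin (θ / 2))) := by
  have hs : (0:ℝ) < Real.sqrt 3 := by positivity
  have hs2 : Real.sqrt 3 ^ 2 = 3 := Real.sq_sqrt (by norm_num)
  have hs1 : 1 < Real.sqrt 3 := by nlinarith
  have h1 : a12 < d := lt_of_le_of_lt (le_max_left _ _) hd
  have h2 : a34 < d := lt_of_le_of_lt (le_max_right _ _) hd
  have hd0 : 0 < d := ha12.trans h1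
  have hdist : ∀ x y u v : ℝ, dist (pt x y) (pt u v) = Real.sqrt ((x - u) ^ 2 + (y - v) ^ 2) := by
    intro x y u v
    rw [EuclideanSpace.dist_eq]
    simp [pt, Fin.sum_univ_two, Real.dist_eq, sq_abs]
  have e1 : dist A₁' O₁₂ = a12 / Real.sqrt 3 := by
    rw [hA₁, hO₁₂, hdist, Real.sqrt_eq_iff_mul_self_eq (by positivity) (by positivity)]
    field_simp
    ring_nf
    rw [hs2]; ring
  have e2 : dist A₃ O₃₄ = a34 / Real.sqrt 3 := by
    rw [hA₃, hO₃₄, hdist, Real.sqrt_eq_iff_mul_self_eq (by positivity) (by positivity)]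
    field_simp
    ring_nf
    rw [hs2]; ring
  have hb : ∀ a : ℝ, 0 < a → a / (2 * Real.sqrt 3) < a / 2 := by
    intro a ha
    apply div_lt_div_of_pos_left ha <;> linarith
  have e3 : dist O₁₂ O₃₄ = d - a12 / (2 * Real.sqrt 3) - a34 / (2 * Real.sqrt 3) := by
    rw [hO₁₂, hO₃₄, hdist]
    have := hb a12 ha12
    have := hb a34 ha34
    rw [sub_zero, zero_pow two_ne_zero, zero_add, Real.sqrt_sq (by linarith)]
  have e4 : Real.cos (θ / 2) / (2 * Real.sin (θ / 2)) = d / (a12 + a34) := by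
    have ht : θ / 2 = Real.arctan ((a12 + a34) / (2 * d)) := by rw [hθ]; ring
    have hc : 0 < Real.cos (θ / 2) := by rw [ht]; exact Real.cos_arctan_pos _
    have htan : Real.sin (θ / 2) / Real.cos (θ / 2) = (a12 + a34) / (2 * d) := by
      rw [← Real.tan_eq_sin_div_cos, ht, Real.tan_arctan]
    have hsin : Real.sin (θ / 2) = (a12 + a34) / (2 * d) * Real.cos (θ / 2) := by
      rw [← htan]; field_simp
    rw [hsin]
    field_simp
  rw [e1, e2, e3, e4]
  field_simp
  linear_combination (-(a12 + a34)) * hs2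
end

section
/- The Steiner points satisfy the 120° condition: ∠ A₁' O₁₂ A₂' = ∠ A₁' O₁₂ O₃₄ = ∠ A₂' O₁₂ O₃₄ = 2π/3 and ∠ A₄ O₃₄ A₃ = ∠ A₄ O₃₄ O₁₂ = ∠ A₃ O₃₄ O₁₂ = 2π/3. -/
open Real EuclideanGeometry

theorem angle_pt_aux (x1 y1 x2 y2 x3 y3 p q : ℝ) (hp : 0 < p) (hq : 0 < q)
    (h1 : (x1 - x2) ^ 2 + (y1 - y2) ^ 2 = p ^ 2) (h2 : (x3 - x2) ^ 2 + (y3 - y2) ^ 2 = q ^ 2)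
    (h3 : (x1 - x2) * (x3 - x2) + (y1 - y2) * (y3 - y2) = -(p * q / 2)) :
    ∠ (pt x1 y1) (pt x2 y2) (pt x3 y3) = 2 * π / 3 := by
  have n1 : ‖pt x1 y1 - pt x2 y2‖ = p := by
    rw [EuclideanSpace.norm_eq]
    simp [pt, Fin.sum_univ_two, h1, Real.sqrt_sq hp.le]
  have n2 : ‖pt x3 y3 - pt x2 y2‖ = q := by
    rw [EuclideanSpace.norm_eq]
    simp [pt, Fin.sum_univ_two, h2, Real.sqrt_sq hq.le]
  have n3 : inner ℝ (pt x1 y1 - pt x2 y2) (pt x3 y3 - pt x2 y2) = -(p * q / 2) := by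
    rw [← h3]
    simp [pt, PiLp.inner_apply, Fin.sum_univ_two]
    ring
  have e : 2 * π / 3 = π - π / 3 := by ring
  unfold EuclideanGeometry.angle InnerProductGeometry.angle
  rw [vsub_eq_sub, vsub_eq_sub, n1, n2, n3]
  have : -(p * q / 2) / (p * q) = -(1 / 2) := by field_simp
  rw [this, Real.arccos_neg, e, ← Real.cos_pi_div_three,
    Real.arccos_cos (by positivity) (by linarith [Real.pi_pos])]

theorem stmt_9 (a12 a34 d : ℝ) (ha12 : 0 < a12) (ha34 : 0 < a34)
    (hd : max a12 a34 < d)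
    (A₁' A₂' A₃ A₄ O₁₂ O₃₄ : EuclideanSpace ℝ (Fin 2))
    (hA₁ : A₁' = pt (-(a12 / 2)) d) (hA₂ : A₂' = pt (a12 / 2) d)
    (hA₃ : A₃ = pt (a34 / 2) 0) (hA₄ : A₄ = pt (-(a34 / 2)) 0)
    (hO₁₂ : O₁₂ = pt 0 (d - a12 / (2 * Real.sqrt 3)))
    (hO₃₄ : O₃₄ = pt 0 (a34 / (2 * Real.sqrt 3))) :
    ∠ A₁' O₁₂ A₂' = 2 * π / 3 ∧ ∠ A₁' O₁₂ O₃₄ = 2 * π / 3 ∧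
    ∠ A₂' O₁₂ O₃₄ = 2 * π / 3 ∧ ∠ A₄ O₃₄ A₃ = 2 * π / 3 ∧
    ∠ A₄ O₃₄ O₁₂ = 2 * π / 3 ∧ ∠ A₃ O₃₄ O₁₂ = 2 * π / 3 := by
  have s3 : Real.sqrt 3 ^ 2 = 3 := Real.sq_sqrt (by norm_num)
  have sp : 0 < Real.sqrt 3 := by positivity
  have s1 : 1 < Real.sqrt 3 := by nlinarith
  obtain ⟨t, ht⟩ : ∃ t, t = a12 / (2 * Real.sqrt 3) := ⟨_, rfl⟩
  obtain ⟨s, hs⟩ : ∃ s, s = a34 / (2 * Real.sqrt 3) := ⟨_, rfl⟩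
  have tp : 0 < t := by rw [ht]; positivity
  have sp' : 0 < s := by rw [hs]; positivity
  have ha : a12 / 2 = Real.sqrt 3 * t := by rw [ht]; field_simp
  have hb : a34 / 2 = Real.sqrt 3 * s := by rw [hs]; field_simp
  have hd1 : a12 < d := lt_of_le_of_lt (le_max_left _ _) hd
  have hd2 : a34 < d := lt_of_le_of_lt (le_max_right _ _) hd
  have hL : 0 < d - t - s := by nlinarith
  rw [← ht, ] at hO₁₂
  rw [← hs] at hO₃₄
  rw [ha] at hA₁ hA₂
  rw [hb] at hA₃ hA₄
  subst hA₁ hA₂ hA₃ hA₄ hO₁₂ hO₃₄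
  refine ⟨angle_pt_aux _ _ _ _ _ _ (2 * t) (2 * t) ?_ ?_ ?_ ?_ ?_,
    angle_pt_aux _ _ _ _ _ _ (2 * t) (d - t - s) ?_ ?_ ?_ ?_ ?_,
    angle_pt_aux _ _ _ _ _ _ (2 * t) (d - t - s) ?_ ?_ ?_ ?_ ?_,
    angle_pt_aux _ _ _ _ _ _ (2 * s) (2 * s) ?_ ?_ ?_ ?_ ?_,
    angle_pt_aux _ _ _ _ _ _ (2 * s) (d - t - s) ?_ ?_ ?_ ?_ ?_,
    angle_pt_aux _ _ _ _ _ _ (2 * s) (d - t - s) ?_ ?_ ?_ ?_ ?_⟩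
  all_goals first
    | positivity
    | assumption
    | (ring_nf; done)
    | (ring_nf; rw [s3]; ring)
end

section
/- The pair (O₁₂, O₃₄) solves the unweighted two-node Steiner problem for the trapezium: for all points P and Q in the plane, dist(A₁',O₁₂) + dist(A₂',O₁₂) + dist(A₃,O₃₄) + dist(A₄,O₃₄) + dist(O₁₂,O₃₄) ≤ dist(A₁',P) + dist(A₂',P) + dist(A₃,Q) + dist(A₄,Q) + dist(P,Q). -/
open Real EuclideanGeometry

theorem pt_dist_ge (P Q : EuclideanSpace ℝ (Fin 2)) (u v : ℝ) (h : u ^ 2 + v ^ 2 = 1) :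
    u * (P 0 - Q 0) + v * (P 1 - Q 1) ≤ dist P Q := by
  rw [EuclideanSpace.dist_eq]
  apply Real.le_sqrt_of_sq_le
  simp only [Fin.sum_univ_two, Real.dist_eq, sq_abs]
  nlinarith [sq_nonneg (u * (P 1 - Q 1) - v * (P 0 - Q 0)),
    congrArg (fun t => t * ((P 0 - Q 0) ^ 2 + (P 1 - Q 1) ^ 2)) h]

theorem pt_dist_eq (x y z w r : ℝ) (hr : 0 ≤ r) (h : (x - z) ^ 2 + (y - w) ^ 2 = r ^ 2) :
    dist (pt x y) (pt z w) = r := by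
  rw [EuclideanSpace.dist_eq]
  simp only [Fin.sum_univ_two, Real.dist_eq, sq_abs]
  rw [← Real.sqrt_sq hr, ← h]
  simp [pt]

theorem stmt_10 (a12 a34 d : ℝ) (ha12 : 0 < a12) (ha34 : 0 < a34)
    (hd : max a12 a34 < d)
    (A₁' A₂' A₃ A₄ O₁₂ O₃₄ : EuclideanSpace ℝ (Fin 2))
    (hA₁ : A₁' = pt (-(a12 / 2)) d) (hA₂ : A₂' = pt (a12 / 2) d)
    (hA₃ : A₃ = pt (a34 / 2) 0) (hA₄ : A₄ = pt (-(a34 / 2)) 0)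
    (hO₁₂ : O₁₂ = pt 0 (d - a12 / (2 * Real.sqrt 3)))
    (hO₃₄ : O₃₄ = pt 0 (a34 / (2 * Real.sqrt 3))) :
    ∀ P Q : EuclideanSpace ℝ (Fin 2),
      dist A₁' O₁₂ + dist A₂' O₁₂ + dist A₃ O₃₄ + dist A₄ O₃₄ + dist O₁₂ O₃₄ ≤
      dist A₁' P + dist A₂' P + dist A₃ Q + dist A₄ Q + dist P Q := by
  intro P Q
  have h3 : Real.sqrt 3 ^ 2 = 3 := Real.sq_sqrt (by norm_num)
  have hs : 0 < Real.sqrt 3 := Real.sqrt_pos.mpr (by norm_num)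
  have e (a : ℝ) : a / (2 * Real.sqrt 3) = a * Real.sqrt 3 / 6 := by
    field_simp
    rw [h3]; ring
  rw [e] at hO₁₂ hO₃₄
  generalize Real.sqrt 3 = s at *
  have hs2 : s < 2 := by nlinarith
  have h1 := (le_max_left a12 a34).trans_lt hd
  have h2 := (le_max_right a12 a34).trans_lt hd
  have u1 : (s / 2) ^ 2 + (1 / 2 : ℝ) ^ 2 = 1 := by nlinarith
  have b1 := pt_dist_ge A₁' P (-(s / 2)) (1 / 2) (by nlinarith)
  have b2 := pt_dist_ge A₂' P (s / 2) (1 / 2) (by nlinarith)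
  have b3 := pt_dist_ge A₃ Q (s / 2) (-(1 / 2)) (by nlinarith)
  have b4 := pt_dist_ge A₄ Q (-(s / 2)) (-(1 / 2)) (by nlinarith)
  have b5 := pt_dist_ge P Q 0 1 (by norm_num)
  have c1 : dist A₁' O₁₂ = a12 * s / 3 := by
    rw [hA₁, hO₁₂]
    exact pt_dist_eq _ _ _ _ _ (by positivity) (by linear_combination (-a12 ^ 2 / 12) * h3)
  have c2 : dist A₂' O₁₂ = a12 * s / 3 := by
    rw [hA₂, hO₁₂]
    exact pt_dist_eq _ _ _ _ _ (by positivity) (by linear_combination (-a12 ^ 2 / 12) * h3)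
  have c3 : dist A₃ O₃₄ = a34 * s / 3 := by
    rw [hA₃, hO₃₄]
    exact pt_dist_eq _ _ _ _ _ (by positivity) (by linear_combination (-a34 ^ 2 / 12) * h3)
  have c4 : dist A₄ O₃₄ = a34 * s / 3 := by
    rw [hA₄, hO₃₄]
    exact pt_dist_eq _ _ _ _ _ (by positivity) (by linear_combination (-a34 ^ 2 / 12) * h3)
  have c5 : dist O₁₂ O₃₄ = d - a12 * s / 6 - a34 * s / 6 := by
    rw [hO₁₂, hO₃₄]
    exact pt_dist_eq _ _ _ _ _ (by nlinarith) (by ring)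
  rw [c1, c2, c3, c4, c5]
  have p0 (x y : ℝ) : pt x y 0 = x := by simp [pt]
  have p1 (x y : ℝ) : pt x y 1 = y := by simp [pt]
  have q1 : A₁' 0 = -(a12 / 2) ∧ A₁' 1 = d := by rw [hA₁]; exact ⟨p0 _ _, p1 _ _⟩
  have q2 : A₂' 0 = a12 / 2 ∧ A₂' 1 = d := by rw [hA₂]; exact ⟨p0 _ _, p1 _ _⟩
  have q3 : A₃ 0 = a34 / 2 ∧ A₃ 1 = 0 := by rw [hA₃]; exact ⟨p0 _ _, p1 _ _⟩
  have q4 : A₄ 0 = -(a34 / 2) ∧ A₄ 1 = 0 := by rw [hA₄]; exact ⟨p0 _ _, p1 _ _⟩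
  rw [q1.1, q1.2] at b1
  rw [q2.1, q2.2] at b2
  rw [q3.1, q3.2] at b3
  rw [q4.1, q4.2] at b4
  linarith
end

section
/- The function g has π/3 as its unique zero in the open interval (0, π/2); moreover g(θ) > 0 for all θ ∈ (0, π/3) and g(θ) < 0 for all θ ∈ (π/3, π/2). -/
open Real

noncomputable def g (θ : ℝ) : ℝ :=
  Real.sqrt 3 / 2 + Real.cos (θ / 2) / (2 * Real.sin (θ / 2)) - 2 * Real.cos (θ / 2)

lemma g_key (θ : ℝ) (h0 : 0 < θ) (h1 : θ < π / 2) :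
    ∃ k : ℝ, 0 < k ∧ g θ = k * Real.sin (π / 12 - θ / 4) := by
  have hpi := Real.pi_pos
  have hs : 0 < Real.sin (θ / 2) := Real.sin_pos_of_pos_of_lt_pi (by linarith) (by linarith)
  have hc : 0 < Real.cos (3 * θ / 4 + π / 12) :=
    Real.cos_pos_of_mem_Ioo ⟨by linarith, by linarith⟩
  refine ⟨2 * Real.cos (3 * θ / 4 + π / 12) / Real.sin (θ / 2), by positivity, ?_⟩
  have e := Real.sin_sub_sin (θ / 2 + π / 6) (2 * (θ / 2))
  rw [Real.sin_add, Real.sin_two_mul, Real.cos_pi_div_six, Real.sin_pi_div_six,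
    show (θ / 2 + π / 6 - 2 * (θ / 2)) / 2 = π / 12 - θ / 4 by ring,
    show (θ / 2 + π / 6 + 2 * (θ / 2)) / 2 = 3 * θ / 4 + π / 12 by ring] at e
  have : g θ = (Real.sin (θ / 2) * (√3 / 2) + Real.cos (θ / 2) * (1 / 2)
      - 2 * Real.sin (θ / 2) * Real.cos (θ / 2)) / Real.sin (θ / 2) := by
    unfold g
    field_simp
  rw [this, e]
  ring

theorem stmt_13 :
    g (π / 3) = 0 ∧
    (∀ θ ∈ Set.Ioo 0 (π / 2), g θ = 0 → θ = π / 3) ∧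
    (∀ θ ∈ Set.Ioo 0 (π / 3), 0 < g θ) ∧
    (∀ θ ∈ Set.Ioo (π / 3) (π / 2), g θ < 0) := by
  have hpi := Real.pi_pos
  have hpos : ∀ θ ∈ Set.Ioo 0 (π / 3), 0 < g θ := by
    rintro θ ⟨h0, h1⟩
    obtain ⟨k, hk, e⟩ := g_key θ h0 (by linarith)
    rw [e]
    exact mul_pos hk (Real.sin_pos_of_pos_of_lt_pi (by linarith) (by linarith))
  have hneg : ∀ θ ∈ Set.Ioo (π / 3) (π / 2), g θ < 0 := by
    rintro θ ⟨h0, h1⟩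
    obtain ⟨k, hk, e⟩ := g_key θ (by linarith) h1
    rw [e]
    exact mul_neg_of_pos_of_neg hk
      (Real.sin_neg_of_neg_of_neg_pi_lt (by linarith) (by linarith))
  refine ⟨?_, ?_, hpos, hneg⟩
  · obtain ⟨k, hk, e⟩ := g_key (π / 3) (by linarith) (by linarith)
    rw [e, show π / 12 - π / 3 / 4 = 0 by ring, Real.sin_zero, mul_zero]
  · rintro θ ⟨h0, h1⟩ h
    rcases lt_trichotomy θ (π / 3) with hl | hl | hl
    · exact absurd h (hpos θ ⟨h0, hl⟩).ne'
    · exact hl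
    · exact absurd h (hneg θ ⟨hl, h1⟩).ne
end

section
/- For every θ ∈ (0, π/2), the derivative of g at θ equals sin(θ/2) − 1/(4·sin(θ/2)²); in particular, for θ ∈ (0, π/2) this derivative vanishes if and only if sin(θ/2)³ = 1/4. Consequently, setting θ* = 2·arcsin((1/4)^(1/3)) (so θ* ∈ (0, π/2)), g is strictly decreasing on the interval (0, θ*] and strictly increasing on the interval [θ*, π/2), so g attains its minimum over (0, π/2) at θ*. -/
open Real

theorem stmt_15 (θstar : ℝ)
    (hθstar : θstar = 2 * Real.arcsin ((1 / 4 : ℝ) ^ ((1 : ℝ) / 3))) :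
    (∀ θ ∈ Set.Ioo 0 (π / 2),
      HasDerivAt g (Real.sin (θ / 2) - 1 / (4 * Real.sin (θ / 2) ^ 2)) θ) ∧
    (∀ θ ∈ Set.Ioo 0 (π / 2),
      (Real.sin (θ / 2) - 1 / (4 * Real.sin (θ / 2) ^ 2) = 0 ↔
        Real.sin (θ / 2) ^ 3 = 1 / 4)) ∧
    θstar ∈ Set.Ioo 0 (π / 2) ∧
    StrictAntiOn g (Set.Ioc 0 θstar) ∧
    StrictMonoOn g (Set.Ico θstar (π / 2)) ∧
    (∀ θ ∈ Set.Ioo 0 (π / 2), g θstar ≤ g θ) := by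
  have hpi := Real.pi_pos
  have hs : ∀ θ ∈ Set.Ioo 0 (π / 2), 0 < Real.sin (θ / 2) := fun θ h =>
    Real.sin_pos_of_pos_of_lt_pi (by linarith [h.1]) (by linarith [h.2])
  have hd : ∀ θ ∈ Set.Ioo 0 (π / 2),
      HasDerivAt g (Real.sin (θ / 2) - 1 / (4 * Real.sin (θ / 2) ^ 2)) θ := by
    intro θ h
    have h0 := hs θ h
    have h1 : HasDerivAt (fun x : ℝ => x / 2) (1 / 2) θ := (hasDerivAt_id θ).div_const 2
    have hc := h1.cos
    have hsn := h1.sin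
    have hh := ((hc.div (hsn.const_mul 2) (by positivity)).const_add (Real.sqrt 3 / 2)).sub
      (hc.const_mul 2)
    have hsq := Real.sin_sq_add_cos_sq (θ / 2)
    have hg : g = fun x => Real.sqrt 3 / 2 + Real.cos (x / 2) / (2 * Real.sin (x / 2))
      - 2 * Real.cos (x / 2) := rfl
    rw [hg]
    refine hh.congr_deriv ?_
    field_simp
    linear_combination (-4) * hsq
  set a : ℝ := (1 / 4 : ℝ) ^ ((1 : ℝ) / 3) with ha
  have ha0 : 0 < a := by positivity
  have ha3 : a ^ 3 = 1 / 4 := by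
    rw [ha, ← Real.rpow_natCast, ← Real.rpow_mul (by norm_num)]
    norm_num
  have ha1 : a < Real.sqrt 2 / 2 := by
    have h2 : Real.sqrt 2 ^ 2 = 2 := Real.sq_sqrt (by norm_num)
    have h3 : 1 < Real.sqrt 2 := by
      rw [Real.lt_sqrt] <;> norm_num
    refine lt_of_pow_lt_pow_left₀ 3 (by positivity) ?_
    rw [ha3]
    nlinarith
  have hle : Real.sqrt 2 / 2 ≤ 1 := by
    rw [← Real.sin_pi_div_four]; exact Real.sin_le_one _
  have hst : Real.sin (θstar / 2) = a := by
    rw [hθstar, mul_div_cancel_left₀ _ (by norm_num : (2:ℝ) ≠ 0)]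
    exact Real.sin_arcsin (by linarith) (by linarith)
  have hmem : θstar ∈ Set.Ioo 0 (π / 2) := by
    have h1 : 0 < Real.arcsin a := Real.arcsin_pos.2 ha0
    have h2 : Real.arcsin a < π / 4 := by
      rw [Real.arcsin_lt_iff_lt_sin' ⟨by linarith, by linarith⟩, Real.sin_pi_div_four]
      exact ha1
    rw [hθstar]
    exact ⟨by linarith, by linarith⟩
  have hform : ∀ θ ∈ Set.Ioo 0 (π / 2), Real.sin (θ / 2) - 1 / (4 * Real.sin (θ / 2) ^ 2)
      = (Real.sin (θ / 2) ^ 3 - 1 / 4) / Real.sin (θ / 2) ^ 2 := by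
    intro θ h
    have := hs θ h
    field_simp
  have hanti : StrictAntiOn g (Set.Ioc 0 θstar) := by
    refine strictAntiOn_of_deriv_neg (convex_Ioc _ _) (fun x hx => ?_) (fun x hx => ?_)
    · exact (hd x ⟨hx.1, hx.2.trans_lt hmem.2⟩).continuousAt.continuousWithinAt
    · rw [interior_Ioc] at hx
      have hx' : x ∈ Set.Ioo 0 (π / 2) := ⟨hx.1, hx.2.trans hmem.2⟩
      have h0 := hs x hx'
      rw [(hd x hx').deriv, hform x hx']
      have hlt : Real.sin (x / 2) < a := by
        rw [← hst]
        exact Real.sin_lt_sin_of_lt_of_le_pi_div_two (by linarith [hx.1])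
          (by linarith [hmem.2]) (by linarith [hx.2])
      have := pow_lt_pow_left₀ hlt h0.le (n := 3) (by norm_num)
      exact div_neg_of_neg_of_pos (by linarith) (by positivity)
  have hmono : StrictMonoOn g (Set.Ico θstar (π / 2)) := by
    refine strictMonoOn_of_deriv_pos (convex_Ico _ _) (fun x hx => ?_) (fun x hx => ?_)
    · exact (hd x ⟨hmem.1.trans_le hx.1, hx.2⟩).continuousAt.continuousWithinAt
    · rw [interior_Ico] at hx
      have hx' : x ∈ Set.Ioo 0 (π / 2) := ⟨hmem.1.trans hx.1, hx.2⟩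
      have h0 := hs x hx'
      rw [(hd x hx').deriv, hform x hx']
      have hlt : a < Real.sin (x / 2) := by
        rw [← hst]
        exact Real.sin_lt_sin_of_lt_of_le_pi_div_two (by linarith [hmem.1])
          (by linarith [hx.2]) (by linarith [hx.1])
      have := pow_lt_pow_left₀ hlt ha0.le (n := 3) (by norm_num)
      exact div_pos (by linarith) (by positivity)
  refine ⟨hd, fun θ h => ?_, hmem, hanti, hmono, fun θ h => ?_⟩
  · have h0 := hs θ h
    rw [hform θ h, div_eq_zero_iff, sub_eq_zero]
    exact or_iff_left (by positivity)
  · rcases le_total θ θstar with h1 | h1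
    · exact hanti.antitoneOn ⟨h.1, h1⟩ ⟨hmem.1, le_rfl⟩ h1
    · exact hmono.monotoneOn ⟨le_rfl, hmem.2⟩ ⟨h1, h.2⟩ h1
end

section
/- Minimum tree for a boundary symmetric tetrahedron: for all points P and Q in ℝ³, dist(A₁,P₀) + dist(A₂,P₀) + dist(A₃,Q₀) + dist(A₄,Q₀) + w·dist(P₀,Q₀) ≤ dist(A₁,P) + dist(A₂,P) + dist(A₃,Q) + dist(A₄,Q) + w·dist(P,Q), and the minimum value equals 2·(a12 + a34)·cos(θ/2); that is, the two nodes of the minimum tree lie on the common perpendicular of the edges A₁A₂ and A₄A₃ and the tree has the same length as the minimum construction tree of the associated isosceles trapezium. -/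
open Real EuclideanGeometry

noncomputable def pt3 (x y z : ℝ) : EuclideanSpace ℝ (Fin 3) :=
  (WithLp.equiv 2 (Fin 3 → ℝ)).symm ![x, y, z]


theorem aux_cs (A P : EuclideanSpace ℝ (Fin 3)) (u v t : ℝ) (h : u^2+v^2+t^2 = 1) :
    (A 0 - P 0) * u + (A 1 - P 1) * v + (A 2 - P 2) * t ≤ dist A P := by
  rw [EuclideanSpace.dist_eq]
  apply Real.le_sqrt_of_sq_le
  simp only [Fin.sum_univ_three, Real.dist_eq, sq_abs]
  generalize A 0 - P 0 = a
  generalize A 1 - P 1 = b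
  generalize A 2 - P 2 = c
  have : (a*u+b*v+c*t)^2 + ((a*v-b*u)^2+(a*t-c*u)^2+(b*t-c*v)^2)
      = (a^2+b^2+c^2)*(u^2+v^2+t^2) := by ring
  rw [h] at this
  nlinarith [sq_nonneg (a*v-b*u), sq_nonneg (a*t-c*u), sq_nonneg (b*t-c*v)]

theorem aux_dist (a b c a' b' c' D : ℝ) (hD : 0 ≤ D)
    (h : (a-a')^2+(b-b')^2+(c-c')^2 = D^2) :
    dist (pt3 a b c) (pt3 a' b' c') = D := by
  rw [EuclideanSpace.dist_eq]
  have : ∑ i, dist ((pt3 a b c) i) ((pt3 a' b' c') i) ^ 2 = D^2 := by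
    rw [← h]
    simp [Fin.sum_univ_three, Real.dist_eq, sq_abs, pt3]
  rw [this, Real.sqrt_sq hD]

theorem stmt_19 (x₁ y₁ x₄ z₁ a12 a34 d θ w : ℝ)
    (hx₁ : 0 < x₁) (hy₁ : 0 ≤ y₁) (hx₄ : 0 < x₄) (hz₁ : 0 < z₁)
    (ha12 : a12 = 2 * Real.sqrt (x₁ ^ 2 + y₁ ^ 2)) (ha34 : a34 = 2 * x₄)
    (hd : d = z₁) (hdmax : max a12 a34 < d)
    (hθ : θ = 2 * Real.arctan ((a12 + a34) / (2 * d)))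
    (hw : w = 2 * Real.sin (θ / 2))
    (A₁ A₂ A₃ A₄ P₀ Q₀ : EuclideanSpace ℝ (Fin 3))
    (hA₁ : A₁ = pt3 (-x₁) (-y₁) z₁) (hA₂ : A₂ = pt3 x₁ y₁ z₁)
    (hA₃ : A₃ = pt3 x₄ 0 0) (hA₄ : A₄ = pt3 (-x₄) 0 0)
    (hP₀ : P₀ = pt3 0 0 (d - a12 / 2 * Real.tan (θ / 2)))
    (hQ₀ : Q₀ = pt3 0 0 (a34 / 2 * Real.tan (θ / 2))) :
    (∀ P Q : EuclideanSpace ℝ (Fin 3),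
      dist A₁ P₀ + dist A₂ P₀ + dist A₃ Q₀ + dist A₄ Q₀ + w * dist P₀ Q₀ ≤
      dist A₁ P + dist A₂ P + dist A₃ Q + dist A₄ Q + w * dist P Q) ∧
    dist A₁ P₀ + dist A₂ P₀ + dist A₃ Q₀ + dist A₄ Q₀ + w * dist P₀ Q₀ =
      2 * (a12 + a34) * Real.cos (θ / 2) := by
  have hr0 : 0 < Real.sqrt (x₁ ^ 2 + y₁ ^ 2) := Real.sqrt_pos.mpr (by positivity)
  have hr2 : Real.sqrt (x₁ ^ 2 + y₁ ^ 2) ^ 2 = x₁ ^ 2 + y₁ ^ 2 := Real.sq_sqrt (by positivity)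
  generalize Real.sqrt (x₁ ^ 2 + y₁ ^ 2) = r at *
  have hφ : θ / 2 = Real.arctan ((a12 + a34) / (2 * d)) := by rw [hθ]; ring
  have hC : 0 < Real.cos (θ / 2) := by rw [hφ]; exact Real.cos_arctan_pos _
  have ht : Real.tan (θ / 2) = (r + x₄) / d := by
    rw [hφ, Real.tan_arctan, ha12, ha34]
    have : d ≠ 0 := by rw [hd]; exact hz₁.ne'
    field_simp
  have hSC := Real.sin_sq_add_cos_sq (θ / 2)
  have htS : Real.sin (θ / 2) = Real.tan (θ / 2) * Real.cos (θ / 2) :=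
    (Real.tan_mul_cos hC.ne').symm
  generalize Real.tan (θ / 2) = t at *
  generalize Real.sin (θ / 2) = S at *
  generalize Real.cos (θ / 2) = C at *
  clear hφ hθ
  have h1 := (le_max_left a12 a34).trans_lt hdmax
  have h2 := (le_max_right a12 a34).trans_lt hdmax
  clear hdmax
  subst hd
  have htd : t * d = r + x₄ := by rw [ht]; field_simp
  have ht0 : 0 < t := by rw [ht]; positivity
  have ht1 : t < 1 := by rw [ht, div_lt_one hz₁]; linarith
  clear ht
  have hS0 : 0 < S := by rw [htS]; positivity
  have hC2 : C^2 * (1 + t^2) = 1 := by rw [htS] at hSC; linarith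
  have hCi : (1/C)^2 = 1 + t^2 := by
    field_simp; linarith
  have e1 : dist A₁ P₀ = r * (1/C) := by
    rw [hA₁, hP₀]
    apply aux_dist _ _ _ _ _ _ _ (by positivity)
    rw [mul_pow, hCi, ha12]; linear_combination -hr2
  have e2 : dist A₂ P₀ = r * (1/C) := by
    rw [hA₂, hP₀]
    apply aux_dist _ _ _ _ _ _ _ (by positivity)
    rw [mul_pow, hCi, ha12]; linear_combination -hr2
  have e3 : dist A₃ Q₀ = x₄ * (1/C) := by
    rw [hA₃, hQ₀]
    apply aux_dist _ _ _ _ _ _ _ (by positivity)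
    rw [mul_pow, hCi, ha34]; ring
  have e4 : dist A₄ Q₀ = x₄ * (1/C) := by
    rw [hA₄, hQ₀]
    apply aux_dist _ _ _ _ _ _ _ (by positivity)
    rw [mul_pow, hCi, ha34]; ring
  have e5 : dist P₀ Q₀ = d - (r + x₄) * t := by
    rw [hP₀, hQ₀]
    apply aux_dist
    · nlinarith
    · rw [ha12, ha34]; ring
  have hval : dist A₁ P₀ + dist A₂ P₀ + dist A₃ Q₀ + dist A₄ Q₀ + w * dist P₀ Q₀ =
      2 * (a12 + a34) * C := by
    rw [e1, e2, e3, e4, e5, hw, ha12, ha34]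
    have hCC : 1 / C = C * (1 + t^2) := by field_simp; linarith
    rw [hCC, htS]
    linear_combination 2 * C * htd
  refine ⟨fun P Q => ?_, hval⟩
  rw [hval]
  have hu : (x₁ / r * C)^2 + (y₁ / r * C)^2 + S^2 = 1 := by
    have : (x₁ / r * C)^2 + (y₁ / r * C)^2 = C^2 := by
      field_simp; linarith
    rw [this]; linarith
  have f1 := aux_cs A₁ P (-(x₁ / r * C)) (-(y₁ / r * C)) S (by linarith)
  have f2 := aux_cs A₂ P (x₁ / r * C) (y₁ / r * C) S (by linarith)
  have f3 := aux_cs A₃ Q C 0 (-S) (by linarith)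
  have f4 := aux_cs A₄ Q (-C) 0 (-S) (by linarith)
  have f5 := aux_cs P Q 0 0 1 (by norm_num)
  have f6 := mul_le_mul_of_nonneg_left f5 (by rw [hw]; positivity : 0 ≤ w)
  have g : x₁ * (x₁ / r * C) + y₁ * (y₁ / r * C) = r * C := by
    field_simp; linarith
  have hSd : S * d = (r + x₄) * C := by rw [htS]; linear_combination C * htd
  have k1 : A₁ 0 = -x₁ ∧ A₁ 1 = -y₁ ∧ A₁ 2 = d := by rw [hA₁]; simp [pt3]
  have k2 : A₂ 0 = x₁ ∧ A₂ 1 = y₁ ∧ A₂ 2 = d := by rw [hA₂]; simp [pt3]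
  have k3 : A₃ 0 = x₄ ∧ A₃ 1 = 0 ∧ A₃ 2 = 0 := by rw [hA₃]; simp [pt3]
  have k4 : A₄ 0 = -x₄ ∧ A₄ 1 = 0 ∧ A₄ 2 = 0 := by rw [hA₄]; simp [pt3]
  rw [k1.1, k1.2.1, k1.2.2] at f1
  rw [k2.1, k2.2.1, k2.2.2] at f2
  rw [k3.1, k3.2.1, k3.2.2] at f3
  rw [k4.1, k4.2.1, k4.2.2] at f4
  have f7 : 2 * S * (P 2 - Q 2) ≤ w * dist P Q := by
    rw [← hw]; linarith
  rw [ha12, ha34]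
  linarith
end
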